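/- Let n ≥ 1 and let S be a finite-dimensional real normed vector space equipped with linear operators β_a (a = 1,…,n) satisfying β_a β_b + β_b β_a = −δ_{ab}·id_S. For smooth ψ : ℝⁿ → S define Dψ = Σ_a β_a(∂_a ψ) and the twistor operator (Tψ)_a = ∂_a ψ + (2/n) β_a(Dψ). Then Σ_a ∂_a((Tψ)_a) = (2(n−1)/n)·D(Dψ); equivalently, with T*φ = −Σ_a ∂_a φ_a, one has −T*Tψ = (2(1−n)/n)·D²ψ. (Flat-space form of the key identity (4.15) in the proof of Proposition 4.7.) -/

import Mathlib

noncomputable section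

/-- Points of `ℝⁿ`. -/
abbrev Vec (n : ℕ) := Fin n → ℝ

/-- Partial derivative `∂_a f` in the `a`-th coordinate direction. -/
def pd {n : ℕ} {S : Type*} [NormedAddCommGroup S] [NormedSpace ℝ S]
    (a : Fin n) (f : Vec n → S) (x : Vec n) : S :=
  fderiv ℝ f x (Pi.single a 1)

/-- The Dirac operator `Dψ = Σ_a β_a (∂_a ψ)` on `S`-valued maps. -/
def dirac {n : ℕ} {S : Type*} [NormedAddCommGroup S] [NormedSpace ℝ S]
    (β : Fin n → S →ₗ[ℝ] S) (ψ : Vec n → S) (x : Vec n) : S :=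
  ∑ a, β a (pd a ψ x)

/-!
The Clifford relations are symmetric in their two indices and second derivatives commute, so
symmetrizing `D²ψ = Σ_{a,b} β_a β_b ∂_a ∂_b ψ` leaves only the diagonal: `2 D²ψ = -Δψ`. On the
other hand, linearity alone gives `Σ_a ∂_a (Tψ)_a = Δψ + (2/n) D²ψ`, and `-2 + 2/n = 2(1-n)/n`.
-/

section Clifford

variable {ι R M : Type*} [DecidableEq ι] [Ring R] [AddCommGroup M] [Module R M]

/-- The Clifford relations `β_a β_b + β_b β_a = -δ_{ab}` for a family of endomorphisms of a module.
They are normalized so that `2 β_a² = -1`, which is what puts the factor `2` in `twistor`. -/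
def CliffordRelations (β : ι → M →ₗ[R] M) : Prop :=
  ∀ a b, β a ∘ₗ β b + β b ∘ₗ β a = if a = b then -LinearMap.id else 0

theorem CliffordRelations.apply_add_apply {β : ι → M →ₗ[R] M} (hβ : CliffordRelations β)
    (a b : ι) (m : M) : β a (β b m) + β b (β a m) = if a = b then -m else 0 := by
  have h := LinearMap.congr_fun (hβ a b) m
  split_ifs at h ⊢ <;> simpa using h

theorem CliffordRelations.two_nsmul_sum_sum_apply [Fintype ι] {β : ι → M →ₗ[R] M}
    (hβ : CliffordRelations β) {s : ι → ι → M} (hs : ∀ a b, s a b = s b a) :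
    2 • ∑ a, ∑ b, β a (β b (s a b)) = -∑ a, s a a := by
  have swap : ∑ a, ∑ b, β a (β b (s a b)) = ∑ a, ∑ b, β b (β a (s a b)) := by
    rw [Finset.sum_comm]
    simp only [hs]
  calc 2 • ∑ a, ∑ b, β a (β b (s a b))
      = ∑ a, ∑ b, (β a (β b (s a b)) + β b (β a (s a b))) := by
        simp only [two_nsmul, Finset.sum_add_distrib, ← swap]
    _ = ∑ a, ∑ b, if a = b then -s a b else 0 := by simp only [hβ.apply_add_apply]
    _ = -∑ a, s a a := by simp

end Clifford

section PartialDerivatives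

variable {n : ℕ} {E F : Type*} [NormedAddCommGroup E] [NormedSpace ℝ E]
  [NormedAddCommGroup F] [NormedSpace ℝ F] {f g : Vec n → E} {x : Vec n}

theorem pd_add (a : Fin n) (hf : DifferentiableAt ℝ f x) (hg : DifferentiableAt ℝ g x) :
    pd a (fun y => f y + g y) x = pd a f x + pd a g x := by
  simp only [pd, fderiv_fun_add hf hg, add_apply]

theorem pd_const_smul (a : Fin n) (c : ℝ) (hf : DifferentiableAt ℝ f x) :
    pd a (fun y => c • f y) x = c • pd a f x := by
  simp only [pd, fderiv_fun_const_smul hf, smul_apply]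

theorem pd_sum {ι : Type*} (a : Fin n) (s : Finset ι) {f : ι → Vec n → E}
    (hf : ∀ i ∈ s, DifferentiableAt ℝ (f i) x) :
    pd a (fun y => ∑ i ∈ s, f i y) x = ∑ i ∈ s, pd a (f i) x := by
  simp only [pd, fderiv_fun_sum hf, sum_apply]

theorem hasFDerivAt_linearMap_apply {L : E →ₗ[ℝ] F} (hL : Continuous L)
    (hf : DifferentiableAt ℝ f x) :
    HasFDerivAt (fun y => L (f y)) ((⟨L, hL⟩ : E →L[ℝ] F) ∘L fderiv ℝ f x) x :=
  (⟨L, hL⟩ : E →L[ℝ] F).hasFDerivAt.comp x hf.hasFDerivAt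

theorem pd_linearMap_apply (a : Fin n) {L : E →ₗ[ℝ] F} (hL : Continuous L)
    (hf : DifferentiableAt ℝ f x) : pd a (fun y => L (f y)) x = L (pd a f x) := by
  rw [pd, (hasFDerivAt_linearMap_apply hL hf).fderiv]
  rfl

theorem differentiableAt_fderiv {f : F → E} {x : F} (hf : ContDiffAt ℝ 2 f x) :
    DifferentiableAt ℝ (fderiv ℝ f) x :=
  (hf.fderiv_right (m := 1) one_add_one_eq_two.le).differentiableAt one_ne_zero

theorem differentiableAt_pd (a : Fin n) (hf : ContDiffAt ℝ 2 f x) :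
    DifferentiableAt ℝ (pd a f) x :=
  (differentiableAt_fderiv hf).clm_apply (differentiableAt_const _)

theorem pd_pd (a b : Fin n) (hf : ContDiffAt ℝ 2 f x) :
    pd a (pd b f) x = fderiv ℝ (fderiv ℝ f) x (Pi.single a 1) (Pi.single b 1) := by
  change fderiv ℝ (fun y => fderiv ℝ f y (Pi.single b 1)) x (Pi.single a 1) = _
  simp [fderiv_clm_apply (differentiableAt_fderiv hf) (differentiableAt_const _)]

theorem pd_comm (a b : Fin n) (hf : ContDiffAt ℝ 2 f x) :
    pd a (pd b f) x = pd b (pd a f) x := by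
  rw [pd_pd a b hf, pd_pd b a hf]
  exact hf.isSymmSndFDerivAt (by simp) _ _

/-- The Laplacian `Δψ = Σ_a ∂_a ∂_a ψ`, written in coordinates because `Vec n` carries the sup
norm rather than the inner product that Mathlib's Laplacian requires. -/
def laplacian (f : Vec n → E) (x : Vec n) : E :=
  ∑ a, pd a (pd a f) x

end PartialDerivatives

section Dirac

variable {n : ℕ} {S : Type*} [NormedAddCommGroup S] [NormedSpace ℝ S]
  {β : Fin n → S →ₗ[ℝ] S} {ψ : Vec n → S} {x : Vec n}

theorem differentiableAt_dirac (hβ : ∀ a, Continuous (β a)) (hψ : ContDiffAt ℝ 2 ψ x) :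
    DifferentiableAt ℝ (dirac β ψ) x :=
  DifferentiableAt.fun_sum fun a _ =>
    (hasFDerivAt_linearMap_apply (hβ a) (differentiableAt_pd a hψ)).differentiableAt

theorem pd_dirac (a : Fin n) (hβ : ∀ b, Continuous (β b)) (hψ : ContDiffAt ℝ 2 ψ x) :
    pd a (dirac β ψ) x = ∑ b, β b (pd a (pd b ψ) x) := by
  have hd (b : Fin n) := differentiableAt_pd b hψ
  calc pd a (dirac β ψ) x
      = ∑ b, pd a (fun y => β b (pd b ψ y)) x :=
        pd_sum a _ fun b _ => (hasFDerivAt_linearMap_apply (hβ b) (hd b)).differentiableAt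
    _ = ∑ b, β b (pd a (pd b ψ) x) :=
        Finset.sum_congr rfl fun b _ => pd_linearMap_apply a (hβ b) (hd b)

theorem dirac_dirac (hβ : ∀ a, Continuous (β a)) (hψ : ContDiffAt ℝ 2 ψ x) :
    dirac β (dirac β ψ) x = ∑ a, ∑ b, β a (β b (pd a (pd b ψ) x)) := by
  rw [dirac]
  simp only [pd_dirac _ hβ hψ, map_sum]

theorem laplacian_eq_neg_two_smul_dirac_dirac (hβ : ∀ a, Continuous (β a))
    (hcliff : CliffordRelations β) (hψ : ContDiffAt ℝ 2 ψ x) :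
    laplacian ψ x = (-2 : ℝ) • dirac β (dirac β ψ) x := by
  rw [neg_smul, ofNat_smul_eq_nsmul, dirac_dirac hβ hψ,
    hcliff.two_nsmul_sum_sum_apply fun a b => pd_comm a b hψ, neg_neg, laplacian]

/-- The `a`-th component of the twistor operator, `(Tψ)_a = ∂_a ψ + (2/n) β_a(Dψ)`. -/
def twistor (β : Fin n → S →ₗ[ℝ] S) (ψ : Vec n → S) (a : Fin n) (x : Vec n) : S :=
  pd a ψ x + ((2 : ℝ) / n) • β a (dirac β ψ x)

theorem pd_twistor (a b : Fin n) (hβ : ∀ a, Continuous (β a)) (hψ : ContDiffAt ℝ 2 ψ x) :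
    pd a (twistor β ψ b) x
      = pd a (pd b ψ) x + ((2 : ℝ) / n) • β b (pd a (dirac β ψ) x) := by
  have hD := differentiableAt_dirac hβ hψ
  have hβD := (hasFDerivAt_linearMap_apply (hβ b) hD).differentiableAt
  calc pd a (twistor β ψ b) x
      = pd a (pd b ψ) x + pd a (fun y => ((2 : ℝ) / n) • β b (dirac β ψ y)) x :=
        pd_add a (differentiableAt_pd b hψ) (hβD.fun_const_smul _)
    _ = pd a (pd b ψ) x + ((2 : ℝ) / n) • β b (pd a (dirac β ψ) x) := by
        rw [pd_const_smul a _ hβD, pd_linearMap_apply a (hβ b) hD]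

theorem sum_pd_twistor (hβ : ∀ a, Continuous (β a)) (hψ : ContDiffAt ℝ 2 ψ x) :
    ∑ a, pd a (twistor β ψ a) x
      = laplacian ψ x + ((2 : ℝ) / n) • dirac β (dirac β ψ) x := by
  simp only [pd_twistor _ _ hβ hψ, Finset.sum_add_distrib, ← Finset.smul_sum]
  rfl

theorem twistor_gradient_identity_general (hn : 1 ≤ n) (hβ : ∀ a, Continuous (β a))
    (hcliff : CliffordRelations β) (hψ : ContDiffAt ℝ 2 ψ x) :
    ∑ a, pd a (twistor β ψ a) x
      = ((2 * (1 - (n : ℝ))) / n) • dirac β (dirac β ψ) x := by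
  have hn0 : (n : ℝ) ≠ 0 := by positivity
  rw [sum_pd_twistor hβ hψ, laplacian_eq_neg_two_smul_dirac_dirac hβ hcliff hψ, ← add_smul]
  congr 1
  field_simp
  ring

end Dirac

/-- Flat-space form of the key identity (4.15) in the proof of Proposition 4.7:
with the twistor operator `(Tψ)_a = ∂_a ψ + (2/n) β_a(Dψ)` and
`T*φ = −Σ_a ∂_a φ_a`, one has `−T*Tψ = (2(1−n)/n)·D²ψ`, i.e.
`Σ_a ∂_a((Tψ)_a) = (2(1−n)/n)·D(Dψ)`. -/
theorem twistor_gradient_identity (n : ℕ) (hn : 1 ≤ n)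
    {S : Type*} [NormedAddCommGroup S] [NormedSpace ℝ S] [FiniteDimensional ℝ S]
    (β : Fin n → S →ₗ[ℝ] S)
    (hβ : ∀ a b, (β a) ∘ₗ (β b) + (β b) ∘ₗ (β a)
      = if a = b then -(LinearMap.id : S →ₗ[ℝ] S) else 0)
    (ψ : Vec n → S) (hψ : ContDiff ℝ (⊤ : ℕ∞) ψ)
    (Tψ : Fin n → Vec n → S)
    (hT : ∀ (a : Fin n) (y : Vec n),
      Tψ a y = pd a ψ y + ((2 : ℝ) / n) • β a (dirac β ψ y))
    (x : Vec n) :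
    ∑ a, pd a (Tψ a) x
      = ((2 * (1 - (n : ℝ))) / n) • dirac β (dirac β ψ) x := by
  obtain rfl : Tψ = twistor β ψ := funext₂ hT
  exact twistor_gradient_identity_general hn (fun a => (β a).continuous_of_finiteDimensional) hβ
    (hψ.contDiffAt.of_le (by norm_cast))
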